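/- For every real parameter a > 1/2, the function f_*(s) := d/ds (A(s)·cosh(φ(s))) is odd in s, satisfies f_*(0) = 0 and f_*'(0) = 2·√(a + 1/2) > 0, and solves the self-adjoint mode-one Jacobi equation (B·f_*')'(s) + B(s)·(|II|²(s) − 2 − 1/B(s)²)·f_*(s) = 0 for all s ∈ ℝ, where |II|²(s) := 2·(B''(s)/B(s) − 1). -/

import Mathlib

/-!
The surface `(A cosh φ, A sinh φ, B cos θ, B sin θ)` in the hyperboloid model of `ℍ³` is minimal,
so its coordinates satisfy `Δx = 2x`; for the rotationally invariant coordinate `x₀ = A cosh φ`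
this reads `(B x₀')' = 2 B x₀`. Differentiating a radial equation `(B c')' = lam B c` once more
eliminates `c` and leaves `(B f')' = (lam B - B'' + B'²/B) f` for `f = c'`. With `lam = 2` and the
profile equation `B'² + B B'' = 2 B² + 1`, this is the mode-one Jacobi equation for `f_* = x₀'`.
Evenness of `x₀` gives the parity of `f_*`, and `(B f_*)' = 2 B x₀` at `0` gives
`f_*'(0) = 2 x₀(0) = 2 A(0)`.
-/

namespace MoriCatenoid

/-- Profile function `B(s) = √(a·cosh(2s) − 1/2)` of the Mori family. -/
noncomputable def B (a s : ℝ) : ℝ := Real.sqrt (a * Real.cosh (2 * s) - 1 / 2)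

/-- Profile function `A(s) = √(a·cosh(2s) + 1/2)` of the Mori family. -/
noncomputable def A (a s : ℝ) : ℝ := Real.sqrt (a * Real.cosh (2 * s) + 1 / 2)

/-- The constant `K = √(a² − 1/4)`. -/
noncomputable def K (a : ℝ) : ℝ := Real.sqrt (a ^ 2 - 1 / 4)

/-- The angle function `φ(s) = K·∫₀ˢ dt/(A(t)²·B(t))`. -/
noncomputable def φ (a s : ℝ) : ℝ := K a * ∫ t in (0:ℝ)..s, 1 / ((A a t) ^ 2 * B a t)

/-- The mode-one Jacobi field `f_*(s) = d/ds (A(s)·cosh(φ(s)))`. -/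
noncomputable def fstar (a s : ℝ) : ℝ := deriv (fun t => A a t * Real.cosh (φ a t)) s

/-- Squared norm of the second fundamental form, `|II|²(s) = 2·(B''(s)/B(s) − 1)`. -/
noncomputable def IIsq (a s : ℝ) : ℝ := 2 * (deriv (deriv (B a)) s / B a s - 1)

/-- The mode-`k` potential `W_k(s) = |II|²(s) − 2 − k²/B(s)²`. -/
noncomputable def W (a : ℝ) (k : ℤ) (s : ℝ) : ℝ := IIsq a s - 2 - (k : ℝ) ^ 2 / (B a s) ^ 2

/-- Inverse hyperbolic cosine: `arcosh x = log (x + √(x² − 1))`. -/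
noncomputable def arcosh (x : ℝ) : ℝ := Real.log (x + Real.sqrt (x ^ 2 - 1))

/-- The axial boost field `u_*(s) = −a·sinh(2s)/B(s)`. -/
noncomputable def ustar (a s : ℝ) : ℝ := -a * Real.sinh (2 * s) / B a s

/-- The radial quadratic form of mode `k`:
`S_k(u) = ∫_{−s₀}^{s₀} (B·u'² − B·W_k·u²) − coth(r)·B(s₀)·(u(s₀)² + u(−s₀)²)`,
where `u'` is the derivative of `u` within `[−s₀, s₀]`. -/
noncomputable def Sk (a s₀ r : ℝ) (k : ℤ) (u : ℝ → ℝ) : ℝ :=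
  (∫ s in (-s₀)..s₀,
      (B a s * (derivWithin u (Set.Icc (-s₀) s₀) s) ^ 2 - B a s * W a k s * u s ^ 2))
    - Real.cosh r / Real.sinh r * B a s₀ * (u s₀ ^ 2 + u (-s₀) ^ 2)

section Parity

variable {F : Type*} [NormedAddCommGroup F]

lemma odd_deriv_of_even {𝕜 : Type*} [NontriviallyNormedField 𝕜] [NormedSpace 𝕜 F] {f : 𝕜 → F}
    (hf : f.Even) : (deriv f).Odd := fun s => by
  rw [← neg_eq_iff_eq_neg, ← deriv_comp_neg, funext hf]

lemma odd_integral_of_even [NormedSpace ℝ F] {f : ℝ → F} (hf : f.Even) :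
    Function.Odd fun s => ∫ t in (0 : ℝ)..s, f t := fun s => by
  have h : ∫ t in (0 : ℝ)..s, f t = ∫ t in (-s)..0, f t := by
    simpa only [hf.eq, neg_zero] using intervalIntegral.integral_comp_neg (a := 0) (b := s) f
  exact (intervalIntegral.integral_symm _ _).trans (congrArg Neg.neg h.symm)

end Parity

section RadialEquation

open Filter

variable {𝕜 : Type*} [NontriviallyNormedField 𝕜] {w c : 𝕜 → 𝕜} {lam s : 𝕜}

lemma hasDerivAt_deriv_of_radial_eq (hw : DifferentiableAt 𝕜 w s) (hw₀ : w s ≠ 0)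
    (hc : HasDerivAt (fun t => w t * deriv c t) (lam * (w s * c s)) s) :
    HasDerivAt (deriv c) (lam * c s - deriv w s / w s * deriv c s) s := by
  have h_quot : deriv c =ᶠ[nhds s] fun t => w t * deriv c t / w t :=
    (hw.continuousAt.eventually_ne hw₀).mono fun t ht => (mul_div_cancel_left₀ _ ht).symm
  refine ((hc.fun_div hw.hasDerivAt hw₀).congr_of_eventuallyEq h_quot).congr_deriv ?_
  field_simp

lemma hasDerivAt_mul_deriv_deriv_of_radial_eq (hw : Differentiable 𝕜 w)
    (hw' : DifferentiableAt 𝕜 (deriv w) s) (hw₀ : ∀ t, w t ≠ 0) (hcs : DifferentiableAt 𝕜 c s)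
    (hc : ∀ t, HasDerivAt (fun t => w t * deriv c t) (lam * (w t * c t)) t) :
    HasDerivAt (fun t => w t * deriv (deriv c) t)
      ((lam * w s - deriv (deriv w) s + deriv w s ^ 2 / w s) * deriv c s) s := by
  have hc' t := hasDerivAt_deriv_of_radial_eq (hw t) (hw₀ t) (hc t)
  have h_expand : (fun t => w t * deriv (deriv c) t) =
      fun t => lam * (w t * c t) - deriv w t * deriv c t := by
    funext t
    have := hw₀ t
    rw [(hc' t).deriv]
    field_simp
  rw [h_expand]
  refine ((((hw s).hasDerivAt.fun_mul hcs.hasDerivAt).const_mul lam).fun_sub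
    (hw'.hasDerivAt.fun_mul (hc' s))).congr_deriv ?_
  have := hw₀ s
  field_simp
  ring

end RadialEquation

section HyperbolicPolar

variable {w r θ : ℝ → ℝ} {k q s : ℝ}

/- Because the angular momentum `w r² θ' = k` is constant, the `sinh θ` terms cancel and only the
centrifugal term `k² / (r³ w)` remains. -/
lemma hasDerivAt_mul_deriv_mul_cosh (hw₀ : ∀ t, w t ≠ 0) (hr₀ : ∀ t, r t ≠ 0)
    (hr : Differentiable ℝ r) (hθ : ∀ t, HasDerivAt θ (k / (r t ^ 2 * w t)) t)
    (h_radial : HasDerivAt (fun t => w t * deriv r t) (q * r s - k ^ 2 / (r s ^ 3 * w s)) s) :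
    HasDerivAt (fun t => w t * deriv (fun u => r u * Real.cosh (θ u)) t)
      (q * (r s * Real.cosh (θ s))) s := by
  have h_flux : (fun t => w t * deriv (fun u => r u * Real.cosh (θ u)) t) =
      fun t => w t * deriv r t * Real.cosh (θ t) + k / r t * Real.sinh (θ t) := by
    funext t
    rw [((hr t).hasDerivAt.fun_mul (hθ t).cosh).deriv]
    have := hw₀ t
    have := hr₀ t
    field_simp
  rw [h_flux]
  refine ((h_radial.fun_mul (hθ s).cosh).fun_add
    (((hasDerivAt_const s k).fun_div (hr s).hasDerivAt (hr₀ s)).fun_mul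
      (hθ s).sinh)).congr_deriv ?_
  have := hw₀ s
  have := hr₀ s
  field_simp
  ring

end HyperbolicPolar

section Profiles

variable {a b : ℝ}

lemma mul_cosh_add_pos (ha : 0 ≤ a) (hab : 0 < a + b) (x : ℝ) : 0 < a * Real.cosh x + b := by
  linarith [le_mul_of_one_le_right ha (Real.one_le_cosh x)]

lemma hasDerivAt_mul_sinh_two_mul (a s : ℝ) :
    HasDerivAt (fun t => a * Real.sinh (2 * t)) (2 * (a * Real.cosh (2 * s))) s :=
  ((((hasDerivAt_id' s).const_mul 2).sinh).const_mul a).congr_deriv (by ring)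

lemma hasDerivAt_sqrt_mul_cosh_add {s : ℝ} (h : a * Real.cosh (2 * s) + b ≠ 0) :
    HasDerivAt (fun t => √(a * Real.cosh (2 * t) + b))
      (a * Real.sinh (2 * s) / √(a * Real.cosh (2 * s) + b)) s := by
  refine (((((hasDerivAt_id' s).const_mul 2).cosh).const_mul a).add_const b).sqrt h
    |>.congr_deriv ?_
  rw [← mul_div_mul_left _ _ (two_ne_zero' ℝ)]
  ring

lemma B_radicand_pos (ha : 1 / 2 < a) (s : ℝ) : 0 < a * Real.cosh (2 * s) - 1 / 2 :=
  mul_cosh_add_pos (by linarith) (by linarith) _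

lemma A_radicand_pos (ha : 1 / 2 < a) (s : ℝ) : 0 < a * Real.cosh (2 * s) + 1 / 2 :=
  mul_cosh_add_pos (by linarith) (by linarith) _

lemma B_pos (ha : 1 / 2 < a) (s : ℝ) : 0 < B a s := Real.sqrt_pos.2 (B_radicand_pos ha s)

lemma A_pos (ha : 1 / 2 < a) (s : ℝ) : 0 < A a s := Real.sqrt_pos.2 (A_radicand_pos ha s)

lemma B_sq (ha : 1 / 2 < a) (s : ℝ) : B a s ^ 2 = a * Real.cosh (2 * s) - 1 / 2 :=
  Real.sq_sqrt (B_radicand_pos ha s).le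

lemma A_sq (ha : 1 / 2 < a) (s : ℝ) : A a s ^ 2 = a * Real.cosh (2 * s) + 1 / 2 :=
  Real.sq_sqrt (A_radicand_pos ha s).le

lemma K_sq (ha : 1 / 2 < a) : K a ^ 2 = a ^ 2 - 1 / 4 := Real.sq_sqrt (by nlinarith)

lemma mul_sinh_sq_add_K_sq (ha : 1 / 2 < a) (s : ℝ) :
    (a * Real.sinh (2 * s)) ^ 2 + K a ^ 2 = A a s ^ 2 * B a s ^ 2 := by
  rw [K_sq ha, A_sq ha, B_sq ha, mul_pow, Real.sinh_sq]
  ring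

lemma hasDerivAt_B (ha : 1 / 2 < a) (s : ℝ) :
    HasDerivAt (B a) (a * Real.sinh (2 * s) / B a s) s :=
  hasDerivAt_sqrt_mul_cosh_add (B_radicand_pos ha s).ne'

lemma hasDerivAt_A (ha : 1 / 2 < a) (s : ℝ) :
    HasDerivAt (A a) (a * Real.sinh (2 * s) / A a s) s :=
  hasDerivAt_sqrt_mul_cosh_add (A_radicand_pos ha s).ne'

lemma differentiable_B (ha : 1 / 2 < a) : Differentiable ℝ (B a) := fun s =>
  (hasDerivAt_B ha s).differentiableAt

lemma differentiable_A (ha : 1 / 2 < a) : Differentiable ℝ (A a) := fun s =>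
  (hasDerivAt_A ha s).differentiableAt

lemma differentiable_deriv_B (ha : 1 / 2 < a) : Differentiable ℝ (deriv (B a)) := fun s => by
  rw [funext fun t => (hasDerivAt_B ha t).deriv]
  exact (hasDerivAt_mul_sinh_two_mul a s).differentiableAt.fun_div (differentiable_B ha s)
    (B_pos ha s).ne'

lemma deriv_B_sq_add_B_mul_deriv_deriv_B (ha : 1 / 2 < a) (s : ℝ) :
    deriv (B a) s ^ 2 + B a s * deriv (deriv (B a)) s = 2 * B a s ^ 2 + 1 := by
  have h_half_sq : (fun t => B a t * deriv (B a) t) = fun t => a * Real.sinh (2 * t) :=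
    funext fun t => by rw [(hasDerivAt_B ha t).deriv, mul_div_cancel₀ _ (B_pos ha t).ne']
  have h_product := (differentiable_B ha s).hasDerivAt.fun_mul
    (differentiable_deriv_B ha s).hasDerivAt
  rw [h_half_sq] at h_product
  linear_combination h_product.unique (hasDerivAt_mul_sinh_two_mul a s) - 2 * B_sq ha s

lemma hasDerivAt_B_mul_deriv_A (ha : 1 / 2 < a) (s : ℝ) :
    HasDerivAt (fun t => B a t * deriv (A a) t)
      (2 * B a s * A a s - K a ^ 2 / (A a s ^ 3 * B a s)) s := by
  simp only [fun t => (hasDerivAt_A ha t).deriv]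
  have hA := A_pos ha s
  have hB := B_pos ha s
  refine ((hasDerivAt_B ha s).fun_mul ((hasDerivAt_mul_sinh_two_mul a s).fun_div
    (hasDerivAt_A ha s) hA.ne')).congr_deriv ?_
  have h_cosh : 2 * (a * Real.cosh (2 * s)) = A a s ^ 2 + B a s ^ 2 := by
    rw [A_sq ha, B_sq ha]
    ring
  have h_hyperboloid : A a s ^ 2 = B a s ^ 2 + 1 := by
    rw [A_sq ha, B_sq ha]
    ring
  have h_speed := mul_sinh_sq_add_K_sq ha s
  rw [h_cosh]
  generalize a * Real.sinh (2 * s) = T at *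
  field_simp
  linear_combination h_speed + (T ^ 2 - A a s ^ 2 * B a s ^ 2) * h_hyperboloid

lemma even_B (a : ℝ) : (B a).Even := fun s => by
  simp only [B, mul_neg, Real.cosh_neg]

lemma even_A (a : ℝ) : (A a).Even := fun s => by
  simp only [A, mul_neg, Real.cosh_neg]

lemma odd_φ (a : ℝ) : (φ a).Odd :=
  (odd_integral_of_even fun t => by rw [even_A a, even_B a]).const_smul (K a)

lemma hasDerivAt_φ (ha : 1 / 2 < a) (s : ℝ) :
    HasDerivAt (φ a) (K a / (A a s ^ 2 * B a s)) s := by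
  have h_cont : Continuous fun t => 1 / (A a t ^ 2 * B a t) :=
    continuous_const.div (((differentiable_A ha).continuous.pow 2).mul
      (differentiable_B ha).continuous) fun t =>
        (mul_pos (pow_pos (A_pos ha t) 2) (B_pos ha t)).ne'
  exact ((h_cont.integral_hasStrictDerivAt 0 s).hasDerivAt.const_mul (K a)).congr_deriv
    (mul_one_div _ _)

end Profiles

section TimeCoordinate

variable {a : ℝ}

/-- The time coordinate `x₀ = A cosh φ` of the profile curve in the hyperboloid model of `ℍ³`,
whose arc-length derivative is `fstar`. -/
noncomputable def timeCoord (a s : ℝ) : ℝ := A a s * Real.cosh (φ a s)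

lemma even_timeCoord (a : ℝ) : (timeCoord a).Even := fun s => by
  rw [timeCoord, even_A a, odd_φ a, Real.cosh_neg, timeCoord]

lemma timeCoord_zero (a : ℝ) : timeCoord a 0 = √(a + 1 / 2) := by
  simp [timeCoord, A, (odd_φ a).map_zero]

lemma differentiable_timeCoord (ha : 1 / 2 < a) : Differentiable ℝ (timeCoord a) := fun s =>
  (differentiable_A ha s).fun_mul (hasDerivAt_φ ha s).cosh.differentiableAt

lemma hasDerivAt_B_mul_deriv_timeCoord (ha : 1 / 2 < a) (s : ℝ) :
    HasDerivAt (fun t => B a t * deriv (timeCoord a) t) (2 * (B a s * timeCoord a s)) s :=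
  (hasDerivAt_mul_deriv_mul_cosh (fun t => (B_pos ha t).ne') (fun t => (A_pos ha t).ne')
    (differentiable_A ha) (hasDerivAt_φ ha) (hasDerivAt_B_mul_deriv_A ha s)).congr_deriv
      (mul_assoc _ _ _)

lemma hasDerivAt_fstar (ha : 1 / 2 < a) (s : ℝ) :
    HasDerivAt (fstar a) (2 * timeCoord a s - deriv (B a) s / B a s * fstar a s) s :=
  hasDerivAt_deriv_of_radial_eq (differentiable_B ha s) (B_pos ha s).ne'
    (hasDerivAt_B_mul_deriv_timeCoord ha s)

lemma hasDerivAt_B_mul_deriv_fstar (ha : 1 / 2 < a) (s : ℝ) :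
    HasDerivAt (fun t => B a t * deriv (fstar a) t)
      ((2 * B a s - deriv (deriv (B a)) s + deriv (B a) s ^ 2 / B a s) * fstar a s) s :=
  hasDerivAt_mul_deriv_deriv_of_radial_eq (differentiable_B ha) (differentiable_deriv_B ha s)
    (fun t => (B_pos ha t).ne') (differentiable_timeCoord ha s)
    (hasDerivAt_B_mul_deriv_timeCoord ha)

lemma B_mul_jacobi_potential (ha : 1 / 2 < a) (s : ℝ) :
    B a s * (IIsq a s - 2 - 1 / B a s ^ 2) =
      -(2 * B a s - deriv (deriv (B a)) s + deriv (B a) s ^ 2 / B a s) := by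
  have hB := (B_pos ha s).ne'
  rw [IIsq]
  field_simp
  linear_combination deriv_B_sq_add_B_mul_deriv_deriv_B ha s

end TimeCoordinate

/-- The field `f_*(s) = d/ds (A(s)·cosh(φ(s)))` is odd, vanishes at `0`, has
`f_*'(0) = 2·√(a + 1/2) > 0`, and solves the self-adjoint mode-one Jacobi
equation `(B·f_*')' + B·(|II|² − 2 − 1/B²)·f_* = 0` on `ℝ`. -/
theorem fstar_properties (a : ℝ) (ha : 1 / 2 < a) :
    (∀ s : ℝ, fstar a (-s) = - fstar a s) ∧
    fstar a 0 = 0 ∧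
    deriv (fstar a) 0 = 2 * Real.sqrt (a + 1 / 2) ∧
    0 < deriv (fstar a) 0 ∧
    ∀ s : ℝ, deriv (fun t => B a t * deriv (fstar a) t) s
        + B a s * (IIsq a s - 2 - 1 / B a s ^ 2) * fstar a s = 0 := by
  have h_odd : (fstar a).Odd := odd_deriv_of_even (even_timeCoord a)
  have h_zero : fstar a 0 = 0 := h_odd.map_zero
  have h_deriv : deriv (fstar a) 0 = 2 * Real.sqrt (a + 1 / 2) := by
    rw [(hasDerivAt_fstar ha 0).deriv, h_zero, timeCoord_zero, mul_zero, sub_zero]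
  have h_pos : 0 < 2 * Real.sqrt (a + 1 / 2) :=
    mul_pos two_pos (Real.sqrt_pos.2 (by linarith))
  refine ⟨h_odd, h_zero, h_deriv, h_deriv ▸ h_pos, fun s => ?_⟩
  rw [(hasDerivAt_B_mul_deriv_fstar ha s).deriv, B_mul_jacobi_potential ha, neg_mul,
    add_neg_cancel]

end MoriCatenoid
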